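/- There exist δ* ∈ (0,1/2] and constants 0 < c₁ < c₂ such that for all δ₁, δ₂ ∈ [0, δ*] with max(δ₁,δ₂) > 0, the function x ↦ ∇G_{δ₁}(x)·∇G_{δ₂}(x) is integrable on ℝ² and the quantity v(δ₁,δ₂) := ∫_{ℝ²} ∇G_{δ₁}(x)·∇G_{δ₂}(x) dx satisfies c₁ log(1/max(δ₁,δ₂)) ≤ v(δ₁,δ₂) ≤ c₂ log(1/max(δ₁,δ₂)). -/

import Mathlib

open MeasureTheory
open scoped RealInnerProductSpace

/-- `G(x) = -(2π)⁻¹ log|x| χ(x)` (note `Real.log 0 = 0`, so `G 0 = 0`). -/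
noncomputable def Gfun (χ : EuclideanSpace ℝ (Fin 2) → ℝ)
    (x : EuclideanSpace ℝ (Fin 2)) : ℝ :=
  -(2 * Real.pi)⁻¹ * Real.log ‖x‖ * χ x

/-- The mollifier `ρ_δ(x) = δ⁻² ρ(x/δ)`. -/
noncomputable def mollify (ρ : EuclideanSpace ℝ (Fin 2) → ℝ) (δ : ℝ)
    (x : EuclideanSpace ℝ (Fin 2)) : ℝ :=
  δ⁻¹ ^ 2 * ρ (δ⁻¹ • x)

/-- The mollified Green function `G_δ = G * ρ_δ` for `δ > 0`, with `G₀ = G`. -/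
noncomputable def Gd (χ ρ : EuclideanSpace ℝ (Fin 2) → ℝ) (δ : ℝ)
    (x : EuclideanSpace ℝ (Fin 2)) : ℝ :=
  if δ = 0 then Gfun χ x else ∫ y, Gfun χ (x - y) * mollify ρ δ y

/-!
Write `L = -(2π)⁻¹ log ‖x‖`. Since `∫ ρ = 1`, the formula `G_δ(x) = ∫ G(x - δ z) ρ(z) dz` holds for
all `δ ≥ 0`, including `G₀ = G`. The bounds on the differences and second differences of `L` are
multiples of inverse norms, and `∫ |ρ(z)| ‖x - δ z‖⁻¹ dz = O(max(δ, ‖x‖)⁻¹)` because `‖x‖⁻¹` is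
locally integrable in the plane. Hence `‖∇G_δ(x)‖ = O(max(δ, ‖x‖)⁻¹)`, and near the origin
`‖∇G_δ(x) - ∇L(x)‖ = O(δ ‖x‖⁻²)` wherever `G_δ` is differentiable, which is almost everywhere by
Rademacher's theorem.

For `δ = max(δ₁, δ₂)` the pairing therefore differs from `‖∇L‖² = (2π)⁻² ‖x‖⁻²` by `O(δ ‖x‖⁻³)` on
`δ < ‖x‖ ≤ 1/4` and is `O(δ⁻¹ ‖x‖⁻¹)` on `‖x‖ ≤ δ`. Both errors have bounded integral, the main
term has integral `(2π)⁻¹ log (1/δ) + O(1)`, and the `O(1)` is absorbed by taking `δ` small.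
-/

open Filter Metric Topology
open scoped NNReal

/-! ### Two-point estimates for the logarithmic potential -/

lemma abs_log_sub_log_le {a b : ℝ} (ha : 0 < a) (hb : 0 < b) :
    |Real.log a - Real.log b| ≤ |a - b| * (a⁻¹ + b⁻¹) := by
  have log_sub_le : ∀ {s t : ℝ}, 0 < s → 0 < t → Real.log s - Real.log t ≤ |s - t| * t⁻¹ := by
    intro s t hs ht
    calc Real.log s - Real.log t = Real.log (s / t) := (Real.log_div hs.ne' ht.ne').symm
      _ ≤ s / t - 1 := Real.log_le_sub_one_of_pos (div_pos hs ht)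
      _ = (s - t) * t⁻¹ := by field_simp
      _ ≤ |s - t| * t⁻¹ := by gcongr; exact le_abs_self _
  have hab := log_sub_le ha hb
  have hba := log_sub_le hb ha
  rw [abs_sub_comm b a] at hba
  have ha' : 0 ≤ |a - b| * a⁻¹ := by positivity
  have hb' : 0 ≤ |a - b| * b⁻¹ := by positivity
  rw [mul_add, abs_le]
  constructor <;> linarith

lemma abs_log_le_two_mul_inv {r : ℝ} (hr : 0 ≤ r) (hr2 : r ≤ 2) : |Real.log r| ≤ 2 * r⁻¹ := by
  rcases hr.eq_or_lt with rfl | hpos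
  · simp
  have hlower : -Real.log r ≤ r⁻¹ - 1 := by
    simpa using Real.log_le_sub_one_of_pos (inv_pos.2 hpos)
  have hupper : Real.log r ≤ r - 1 := Real.log_le_sub_one_of_pos hpos
  have hinv : 2⁻¹ ≤ r⁻¹ := inv_anti₀ hpos hr2
  rw [abs_le]
  constructor <;> linarith

/-- The potential `-(2π)⁻¹ log ‖x‖`; on the plane it is the fundamental solution of `-Δ`, and it
is the singular part of `Gfun χ`. Since `Real.log 0 = 0`, its value at the origin is `0`. -/
noncomputable def logPotential {E : Type*} [Norm E] (x : E) : ℝ :=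
  -(2 * Real.pi)⁻¹ * Real.log ‖x‖

lemma inv_two_pi_le_one : (2 * Real.pi)⁻¹ ≤ 1 :=
  inv_le_one_of_one_le₀ (by linarith [Real.pi_gt_three])

lemma abs_neg_inv_two_pi_mul_le (t : ℝ) : |-(2 * Real.pi)⁻¹ * t| ≤ |t| := by
  rw [abs_mul, abs_neg, abs_of_pos (by positivity)]
  exact mul_le_of_le_one_left (abs_nonneg t) inv_two_pi_le_one

section Normed

variable {E : Type*} [NormedAddCommGroup E]

lemma abs_logPotential_le {x : E} (hx : ‖x‖ ≤ 2) : |logPotential x| ≤ 2 * ‖x‖⁻¹ :=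
  (abs_neg_inv_two_pi_mul_le _).trans (abs_log_le_two_mul_inv (norm_nonneg x) hx)

lemma abs_logPotential_sub_le {x y : E} (hx : x ≠ 0) (hy : y ≠ 0) :
    |logPotential x - logPotential y| ≤ ‖x - y‖ * (‖x‖⁻¹ + ‖y‖⁻¹) := by
  calc |logPotential x - logPotential y|
      = |-(2 * Real.pi)⁻¹ * (Real.log ‖x‖ - Real.log ‖y‖)| := by
        simp only [logPotential, mul_sub]
    _ ≤ |Real.log ‖x‖ - Real.log ‖y‖| := abs_neg_inv_two_pi_mul_le _
    _ ≤ |‖x‖ - ‖y‖| * (‖x‖⁻¹ + ‖y‖⁻¹) :=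
        abs_log_sub_log_le (norm_pos_iff.2 hx) (norm_pos_iff.2 hy)
    _ ≤ ‖x - y‖ * (‖x‖⁻¹ + ‖y‖⁻¹) := by gcongr; exact abs_norm_sub_norm_le x y

lemma measurable_logPotential [MeasurableSpace E] [OpensMeasurableSpace E] :
    Measurable (logPotential : E → ℝ) :=
  (Real.measurable_log.comp measurable_norm).const_mul _

end Normed

section InnerProduct

variable {E : Type*} [NormedAddCommGroup E] [InnerProductSpace ℝ E]

-- Ptolemy's inequality for the four points `0, h, x, y`.
lemma abs_norm_sub_mul_norm_sub_le (x y h : E) :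
    |‖x - h‖ * ‖y‖ - ‖y - h‖ * ‖x‖| ≤ ‖x - y‖ * ‖h‖ := by
  have ptolemy := EuclideanGeometry.mul_dist_le_mul_dist_add_mul_dist (V := E) (P := E)
  have hx := ptolemy x y h 0
  have hy := ptolemy y x h 0
  simp only [dist_eq_norm, sub_zero] at hx hy
  rw [norm_sub_rev y x] at hy
  rw [abs_le]
  constructor <;> linarith

lemma abs_logPotential_second_difference_le {x y h : E} (hx : x ≠ 0) (hy : y ≠ 0)
    (hxh : x - h ≠ 0) (hyh : y - h ≠ 0) :
    |logPotential (x - h) - logPotential x - (logPotential (y - h) - logPotential y)| ≤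
      ‖x - y‖ * ‖h‖ * (‖x - h‖⁻¹ * ‖y‖⁻¹ + ‖y - h‖⁻¹ * ‖x‖⁻¹) := by
  have log_mul {a b : E} (ha : a ≠ 0) (hb : b ≠ 0) :
      Real.log (‖a‖ * ‖b‖) = Real.log ‖a‖ + Real.log ‖b‖ :=
    Real.log_mul (norm_ne_zero_iff.2 ha) (norm_ne_zero_iff.2 hb)
  calc |logPotential (x - h) - logPotential x - (logPotential (y - h) - logPotential y)|
      = |-(2 * Real.pi)⁻¹ * (Real.log (‖x - h‖ * ‖y‖) - Real.log (‖y - h‖ * ‖x‖))| := by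
        rw [log_mul hxh hy, log_mul hyh hx]
        simp only [logPotential]
        ring_nf
    _ ≤ |Real.log (‖x - h‖ * ‖y‖) - Real.log (‖y - h‖ * ‖x‖)| := abs_neg_inv_two_pi_mul_le _
    _ ≤ |‖x - h‖ * ‖y‖ - ‖y - h‖ * ‖x‖| * ((‖x - h‖ * ‖y‖)⁻¹ + (‖y - h‖ * ‖x‖)⁻¹) :=
        abs_log_sub_log_le (by positivity) (by positivity)
    _ ≤ ‖x - y‖ * ‖h‖ * (‖x - h‖⁻¹ * ‖y‖⁻¹ + ‖y - h‖⁻¹ * ‖x‖⁻¹) := by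
        rw [mul_inv, mul_inv]
        gcongr
        exact abs_norm_sub_mul_norm_sub_le x y h

lemma differentiableAt_logPotential {x : E} (hx : x ≠ 0) : DifferentiableAt ℝ logPotential x :=
  ((differentiableAt_id.norm ℝ hx).log (norm_ne_zero_iff.2 hx)).const_mul _

lemma hasGradientAt_logPotential [CompleteSpace E] {x : E} (hx : x ≠ 0) :
    HasGradientAt logPotential ((-(2 * Real.pi)⁻¹ * (‖x‖ ^ 2)⁻¹) • x) x := by
  have heq : (logPotential : E → ℝ) =
      fun y => -(2 * Real.pi)⁻¹ * 2⁻¹ * Real.log (‖y‖ ^ 2) := by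
    funext y
    rw [logPotential, Real.log_pow]
    push_cast
    ring
  rw [heq, hasGradientAt_iff_hasFDerivAt]
  refine (((hasStrictFDerivAt_norm_sq x).hasFDerivAt.log (by positivity)).const_mul
    (-(2 * Real.pi)⁻¹ * 2⁻¹)).congr_fderiv ?_
  ext y
  simp only [smul_apply, innerSL_apply_apply, smul_eq_mul, nsmul_eq_mul, Nat.cast_ofNat, map_smul,
    InnerProductSpace.toDual_apply_apply]
  ring

lemma norm_gradient_logPotential [CompleteSpace E] {x : E} (hx : x ≠ 0) :
    ‖gradient logPotential x‖ = (2 * Real.pi)⁻¹ * ‖x‖⁻¹ := by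
  rw [(hasGradientAt_logPotential hx).gradient, norm_smul, norm_mul, norm_neg, norm_inv, norm_inv,
    norm_pow, norm_norm, Real.norm_of_nonneg Real.two_pi_pos.le]
  field_simp

lemma norm_gradient_le_of_eventually_le [CompleteSpace E] {f g : E → ℝ} {x : E}
    (hg : ContinuousAt g x) (hx : 0 ≤ g x)
    (hfg : ∀ᶠ y in 𝓝 x, |f y - f x| ≤ ‖y - x‖ * g y) : ‖gradient f x‖ ≤ g x := by
  refine le_of_forall_gt_imp_ge_of_dense fun c hc => ?_
  have hfc : ∀ᶠ y in 𝓝 x, ‖f y - f x‖ ≤ c * ‖y - x‖ := by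
    filter_upwards [hfg, hg.eventually_lt_const hc] with y hy hyc
    rw [Real.norm_eq_abs, mul_comm c]
    exact hy.trans (by gcongr)
  simpa [gradient] using norm_fderiv_le_of_lip' ℝ (hx.trans hc.le) hfc

lemma measurable_gradient [CompleteSpace E] [MeasurableSpace E] [BorelSpace E] (f : E → ℝ) :
    Measurable (gradient f) :=
  (InnerProductSpace.toDual ℝ E).symm.continuous.measurable.comp (measurable_fderiv ℝ f)

lemma abs_inner_sub_norm_sq_le (u v w : E) :
    |⟪u, v⟫ - ‖w‖ ^ 2| ≤ ‖u - w‖ * ‖v‖ + ‖w‖ * ‖v - w‖ := by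
  have hsplit : ⟪u, v⟫ - ‖w‖ ^ 2 = ⟪u - w, v⟫ + ⟪w, v - w⟫ := by
    rw [inner_sub_left, inner_sub_right, real_inner_self_eq_norm_sq]
    ring
  rw [hsplit]
  exact (abs_add_le _ _).trans
    (add_le_add (abs_real_inner_le_norm _ _) (abs_real_inner_le_norm _ _))

end InnerProduct

/-! ### Mollification of the singularity `‖x‖⁻¹` -/

/-- `ρ` is an admissible mollifier: essentially bounded by `B`, supported in the closed unit ball
and of total mass one. Integrability is part of the last condition, since a non-integrable function
has Bochner integral `0`. -/
structure IsMollifier {E : Type*} [NormedAddCommGroup E] [MeasureSpace E] (B : ℝ) (ρ : E → ℝ) :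
    Prop where
  ae_abs_le : ∀ᵐ x, |ρ x| ≤ B
  support_subset : Function.support ρ ⊆ closedBall 0 1
  integral_eq_one : ∫ x, ρ x = 1

lemma exists_isMollifier_of_continuous {E : Type*} [NormedAddCommGroup E] [ProperSpace E]
    [MeasureSpace E] {ρ : E → ℝ} (hρ : Continuous ρ) (hsupp : Function.support ρ ⊆ closedBall 0 1)
    (hint : ∫ x, ρ x = 1) : ∃ B, IsMollifier B ρ := by
  have hcompact : HasCompactSupport ρ :=
    .of_support_subset_isCompact (isCompact_closedBall 0 1) hsupp
  obtain ⟨B, hB⟩ := hcompact.exists_bound_of_continuous hρ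
  exact ⟨B, .of_forall hB, hsupp, hint⟩

namespace IsMollifier

variable {E : Type*} [NormedAddCommGroup E] [MeasureSpace E] {B : ℝ} {ρ : E → ℝ}

lemma integrable (hρ : IsMollifier B ρ) : Integrable ρ :=
  integrable_of_integral_eq_one hρ.integral_eq_one

lemma bound_nonneg [(ae (volume : Measure E)).NeBot] (hρ : IsMollifier B ρ) : 0 ≤ B :=
  hρ.ae_abs_le.exists.elim fun _ hx => (abs_nonneg _).trans hx

variable [NormedSpace ℝ E]

lemma norm_smul_le (hρ : IsMollifier B ρ) {δ : ℝ} (hδ : 0 ≤ δ) {z : E} (hz : ρ z ≠ 0) :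
    ‖δ • z‖ ≤ δ := by
  rw [norm_smul, Real.norm_of_nonneg hδ]
  exact mul_le_of_le_one_right hδ (mem_closedBall_zero_iff.1 (hρ.support_subset hz))

lemma mul_inv_norm_sub_smul_le (hρ : IsMollifier B ρ) {δ : ℝ} (hδ : 0 ≤ δ) {x : E} (hx : x ≠ 0)
    (hxδ : 2 * δ ≤ ‖x‖) (z : E) : |ρ z| * ‖x - δ • z‖⁻¹ ≤ 2 * ‖x‖⁻¹ * |ρ z| := by
  by_cases hz : ρ z = 0
  · simp [hz]
  have hhalf : ‖x‖ / 2 ≤ ‖x - δ • z‖ := by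
    linarith [norm_sub_norm_le x (δ • z), hρ.norm_smul_le hδ hz]
  calc |ρ z| * ‖x - δ • z‖⁻¹ ≤ |ρ z| * (‖x‖ / 2)⁻¹ := by gcongr
    _ = 2 * ‖x‖⁻¹ * |ρ z| := by rw [inv_div]; ring

lemma aestronglyMeasurable_mul_inv_norm [BorelSpace E] (hρ : IsMollifier B ρ) (x : E) (δ : ℝ) :
    AEStronglyMeasurable fun z => |ρ z| * ‖x - δ • z‖⁻¹ :=
  hρ.integrable.abs.aestronglyMeasurable.mul
    (Measurable.aestronglyMeasurable (by fun_prop))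

lemma integrable_and_integral_mul_inv_norm_sub_smul_le [BorelSpace E] (hρ : IsMollifier B ρ)
    {δ : ℝ} (hδ : 0 ≤ δ) {x : E} (hx : x ≠ 0) (hxδ : 2 * δ ≤ ‖x‖) :
    Integrable (fun z => |ρ z| * ‖x - δ • z‖⁻¹) ∧
      ∫ z, |ρ z| * ‖x - δ • z‖⁻¹ ≤ 2 * ‖x‖⁻¹ * ∫ z, |ρ z| := by
  have hbound := hρ.mul_inv_norm_sub_smul_le hδ hx hxδ
  have hmajorant := hρ.integrable.abs.const_mul (2 * ‖x‖⁻¹)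
  have hint : Integrable fun z => |ρ z| * ‖x - δ • z‖⁻¹ :=
    hmajorant.mono' (hρ.aestronglyMeasurable_mul_inv_norm x δ) <| .of_forall fun z => by
      rw [Real.norm_of_nonneg (by positivity)]
      exact hbound z
  exact ⟨hint, (integral_mono hint hmajorant hbound).trans_eq (integral_const_mul _ _)⟩

end IsMollifier

section InvNorm

variable {E : Type*} [NormedAddCommGroup E] [NormedSpace ℝ E] [FiniteDimensional ℝ E]

lemma locallyIntegrable_inv_norm [MeasurableSpace E] [BorelSpace E] (μ : Measure E)
    [μ.IsAddHaarMeasure] (hdim : 1 < Module.finrank ℝ E) :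
    LocallyIntegrable (fun x : E => ‖x‖⁻¹) μ := by
  refine locallyIntegrable_of_norm_le_rpow (C := 1) (α := 1) hdim.le (by exact_mod_cast hdim) ?_
    measurable_norm.inv.aestronglyMeasurable
  exact .of_forall fun x => by simp [Real.rpow_neg_one]

variable [MeasureSpace E] [BorelSpace E] [(volume : Measure E).IsAddHaarMeasure]
  {B : ℝ} {ρ : E → ℝ}

namespace IsMollifier

lemma exists_integral_mul_inv_norm_sub_le (hρ : IsMollifier B ρ)
    (hdim : 1 < Module.finrank ℝ E) : ∃ C, ∫ z, |ρ z| ≤ C ∧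
      ∀ u, Integrable (fun z => |ρ z| * ‖u - z‖⁻¹) ∧ ∫ z, |ρ z| * ‖u - z‖⁻¹ ≤ C := by
  set near : E → ℝ := (ball 0 1).indicator fun z => ‖z‖⁻¹
  have near_nonneg (z : E) : 0 ≤ near z := Set.indicator_nonneg (fun _ _ => by positivity) z
  have near_integrable : Integrable near :=
    (integrable_indicator_iff measurableSet_ball).2
      (((locallyIntegrable_inv_norm volume hdim).integrableOn_isCompact
        (isCompact_closedBall 0 1)).mono_set ball_subset_closedBall)
  refine ⟨B * (∫ z, near z) + ∫ z, |ρ z|,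
    le_add_of_nonneg_left (mul_nonneg hρ.bound_nonneg (integral_nonneg near_nonneg)), fun u => ?_⟩
  have hbound : ∀ᵐ z, ‖|ρ z| * ‖u - z‖⁻¹‖ ≤ B * near (u - z) + |ρ z| := by
    filter_upwards [hρ.ae_abs_le] with z hz
    rw [Real.norm_of_nonneg (by positivity)]
    by_cases huz : u - z ∈ ball 0 1
    · rw [show near (u - z) = ‖u - z‖⁻¹ from Set.indicator_of_mem huz _]
      exact (mul_le_mul_of_nonneg_right hz (by positivity)).trans
        (le_add_of_nonneg_right (abs_nonneg _))
    · rw [show near (u - z) = 0 from Set.indicator_of_notMem huz _, mul_zero, zero_add]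
      refine mul_le_of_le_one_right (abs_nonneg _) (inv_le_one_of_one_le₀ ?_)
      simpa using huz
  have hmajorant := ((near_integrable.comp_sub_left u).const_mul B).add hρ.integrable.abs
  have hmeas : AEStronglyMeasurable fun z => |ρ z| * ‖u - z‖⁻¹ := by
    simpa using hρ.aestronglyMeasurable_mul_inv_norm u 1
  refine ⟨hmajorant.mono' hmeas hbound, ?_⟩
  calc ∫ z, |ρ z| * ‖u - z‖⁻¹ ≤ ∫ z, (B * near (u - z) + |ρ z|) :=
        (le_abs_self _).trans (norm_integral_le_of_norm_le hmajorant hbound)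
    _ = B * (∫ z, near z) + ∫ z, |ρ z| := by
        rw [integral_add ((near_integrable.comp_sub_left u).const_mul B) hρ.integrable.abs,
          integral_const_mul, integral_sub_left_eq_self]

/-- The case `x = 0 = δ`, in which the integrand is not locally integrable, is excluded by
`0 < max δ ‖x‖`. -/
lemma exists_integral_mul_inv_norm_sub_smul_le (hρ : IsMollifier B ρ)
    (hdim : 1 < Module.finrank ℝ E) : ∃ C, 0 ≤ C ∧ ∀ δ, 0 ≤ δ → ∀ x : E, 0 < max δ ‖x‖ →
      Integrable (fun z => |ρ z| * ‖x - δ • z‖⁻¹) ∧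
        ∫ z, |ρ z| * ‖x - δ • z‖⁻¹ ≤ C * (max δ ‖x‖)⁻¹ := by
  obtain ⟨C, hC, hunit⟩ := hρ.exists_integral_mul_inv_norm_sub_le hdim
  have hC0 : 0 ≤ C := (integral_nonneg fun _ => abs_nonneg _).trans hC
  refine ⟨2 * C, by positivity, fun δ hδ x hmax => ?_⟩
  rcases le_or_gt (2 * δ) ‖x‖ with hfar | hnear
  · have hmax_eq : max δ ‖x‖ = ‖x‖ := max_eq_right (by linarith)
    have hx : x ≠ 0 := norm_pos_iff.1 (hmax_eq ▸ hmax)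
    obtain ⟨hint, hle⟩ := hρ.integrable_and_integral_mul_inv_norm_sub_smul_le hδ hx hfar
    refine ⟨hint, hle.trans ?_⟩
    calc 2 * ‖x‖⁻¹ * ∫ z, |ρ z| ≤ 2 * ‖x‖⁻¹ * C := by gcongr
      _ = 2 * C * (max δ ‖x‖)⁻¹ := by rw [hmax_eq]; ring
  · have hδpos : 0 < δ := by linarith [norm_nonneg x]
    have hscale : (fun z => |ρ z| * ‖x - δ • z‖⁻¹) =
        fun z => δ⁻¹ * (|ρ z| * ‖δ⁻¹ • x - z‖⁻¹) := by
      funext z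
      rw [show x - δ • z = δ • (δ⁻¹ • x - z) by rw [smul_sub, smul_inv_smul₀ hδpos.ne'],
        norm_smul, Real.norm_of_nonneg hδ, mul_inv]
      ring
    rw [hscale, integral_const_mul]
    obtain ⟨hint, hle⟩ := hunit (δ⁻¹ • x)
    refine ⟨hint.const_mul _, ?_⟩
    have hinv : δ⁻¹ ≤ 2 * (max δ ‖x‖)⁻¹ := by
      rw [← div_eq_mul_inv, le_div_iff₀ hmax, inv_mul_le_iff₀ hδpos]
      exact max_le (by linarith) (by linarith)
    calc δ⁻¹ * ∫ z, |ρ z| * ‖δ⁻¹ • x - z‖⁻¹ ≤ 2 * (max δ ‖x‖)⁻¹ * C := by gcongr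
      _ = 2 * C * (max δ ‖x‖)⁻¹ := by ring

end IsMollifier

end InvNorm

/-! ### The truncated potential and its mollifications -/

/-- `χ` is a `K`-Lipschitz cutoff between the closed unit ball and the ball of radius two. -/
structure IsCutoff {E : Type*} [NormedAddCommGroup E] (K : ℝ≥0) (χ : E → ℝ) : Prop where
  lipschitz : LipschitzWith K χ
  eq_one : ∀ x, ‖x‖ ≤ 1 → χ x = 1
  eq_zero : ∀ x, 2 ≤ ‖x‖ → χ x = 0

lemma IsCutoff.abs_le {E : Type*} [NormedAddCommGroup E] {K : ℝ≥0} {χ : E → ℝ}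
    (hχ : IsCutoff K χ) (x : E) : |χ x| ≤ 1 + 2 * K := by
  rcases le_or_gt 2 ‖x‖ with hx | hx
  · rw [hχ.eq_zero x hx, abs_zero]
    positivity
  · have hlip : |χ x - χ 0| ≤ K * ‖x‖ := by simpa [dist_eq_norm] using hχ.lipschitz.dist_le_mul x 0
    rw [hχ.eq_one 0 (by simp)] at hlip
    have hK : K * ‖x‖ ≤ K * 2 := by gcongr
    have hsplit : |χ x| ≤ |χ x - 1| + |(1 : ℝ)| := by simpa using abs_add_le (χ x - 1) 1
    rw [abs_one] at hsplit
    linarith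

lemma exists_isCutoff_of_contDiff {E : Type*} [NormedAddCommGroup E] [NormedSpace ℝ E]
    [FiniteDimensional ℝ E] {χ : E → ℝ} (hχ : ContDiff ℝ 1 χ) (hone : ∀ x, ‖x‖ ≤ 1 → χ x = 1)
    (hzero : ∀ x, 2 ≤ ‖x‖ → χ x = 0) : ∃ K, IsCutoff K χ := by
  have hsupp : HasCompactSupport χ := by
    refine .intro (isCompact_closedBall 0 2) fun x hx => hzero x ?_
    rw [mem_closedBall_zero_iff, not_le] at hx
    exact hx.le
  obtain ⟨K, hK⟩ := hχ.lipschitzWith_of_hasCompactSupport hsupp one_ne_zero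
  exact ⟨K, hK, hone, hzero⟩

lemma ae_sub_smul_ne_zero {E : Type*} [NormedAddCommGroup E] [NormedSpace ℝ E] [MeasurableSpace E]
    (μ : Measure E) [NullSingletonClass μ] {δ : ℝ} {x : E} (hx : 0 < max δ ‖x‖) :
    ∀ᵐ z ∂μ, x - δ • z ≠ 0 := by
  rcases eq_or_ne δ 0 with rfl | hδ
  · exact .of_forall fun z => by simpa using hx
  · filter_upwards [Measure.ae_ne μ (δ⁻¹ • x)] with z hz h
    exact hz (by rw [sub_eq_zero.1 h, inv_smul_smul₀ hδ])

lemma IsMollifier.abs_logPotential_second_difference_mul_le {E : Type*} [NormedAddCommGroup E]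
    [InnerProductSpace ℝ E] [MeasureSpace E] {B : ℝ} {ρ : E → ℝ} (hρ : IsMollifier B ρ) {δ : ℝ}
    (hδ : 0 ≤ δ) {x y z : E} (hx : x ≠ 0) (hy : y ≠ 0) (hxz : x - δ • z ≠ 0)
    (hyz : y - δ • z ≠ 0) :
    |(logPotential (x - δ • z) - logPotential x) * ρ z -
        (logPotential (y - δ • z) - logPotential y) * ρ z| ≤
      ‖x - y‖ * δ * (‖y‖⁻¹ * (|ρ z| * ‖x - δ • z‖⁻¹) + ‖x‖⁻¹ * (|ρ z| * ‖y - δ • z‖⁻¹)) := by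
  by_cases hz : ρ z = 0
  · simp [hz]
  have hδz : ‖δ • z‖ ≤ δ := hρ.norm_smul_le hδ hz
  rw [← sub_mul, abs_mul]
  calc _ ≤ ‖x - y‖ * ‖δ • z‖ * (‖x - δ • z‖⁻¹ * ‖y‖⁻¹ + ‖y - δ • z‖⁻¹ * ‖x‖⁻¹) * |ρ z| := by
        gcongr
        exact abs_logPotential_second_difference_le hx hy hxz hyz
    _ ≤ ‖x - y‖ * δ * (‖x - δ • z‖⁻¹ * ‖y‖⁻¹ + ‖y - δ • z‖⁻¹ * ‖x‖⁻¹) * |ρ z| := by gcongr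
    _ = _ := by ring

local notation "ℝ²" => EuclideanSpace ℝ (Fin 2)

lemma one_lt_finrank_plane : 1 < Module.finrank ℝ ℝ² := by
  rw [finrank_euclideanSpace_fin]
  exact one_lt_two

section Gfun

variable {K : ℝ≥0} {χ : ℝ² → ℝ}

lemma Gfun_eq_logPotential_mul (x : ℝ²) : Gfun χ x = logPotential x * χ x := rfl

namespace IsCutoff

lemma Gfun_eq_logPotential (hχ : IsCutoff K χ) {x : ℝ²} (hx : ‖x‖ ≤ 1) :
    Gfun χ x = logPotential x := by
  rw [Gfun_eq_logPotential_mul, hχ.eq_one x hx, mul_one]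

lemma Gfun_eq_zero (hχ : IsCutoff K χ) {x : ℝ²} (hx : 2 ≤ ‖x‖) : Gfun χ x = 0 := by
  rw [Gfun_eq_logPotential_mul, hχ.eq_zero x hx, mul_zero]

lemma measurable_Gfun (hχ : IsCutoff K χ) : Measurable (Gfun χ) :=
  measurable_logPotential.mul hχ.lipschitz.continuous.measurable

lemma abs_Gfun_le (hχ : IsCutoff K χ) (x : ℝ²) : |Gfun χ x| ≤ 2 * (1 + 2 * K) * ‖x‖⁻¹ := by
  rcases le_or_gt 2 ‖x‖ with hx | hx
  · rw [hχ.Gfun_eq_zero hx, abs_zero]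
    positivity
  · calc |Gfun χ x| = |logPotential x| * |χ x| := abs_mul _ _
      _ ≤ 2 * ‖x‖⁻¹ * (1 + 2 * K) := by
        gcongr
        exacts [abs_logPotential_le hx.le, hχ.abs_le x]
      _ = 2 * (1 + 2 * K) * ‖x‖⁻¹ := by ring

lemma abs_Gfun_sub_le (hχ : IsCutoff K χ) {x y : ℝ²} (hx : x ≠ 0) (hy : y ≠ 0) :
    |Gfun χ x - Gfun χ y| ≤ (1 + 4 * K) * (‖x - y‖ * (‖x‖⁻¹ + ‖y‖⁻¹)) := by
  wlog hyx : ‖y‖ ≤ ‖x‖ generalizing x y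
  · rw [abs_sub_comm, norm_sub_rev, add_comm ‖x‖⁻¹]
    exact this hy hx (le_of_not_ge hyx)
  rcases le_or_gt 2 ‖y‖ with hy2 | hy2
  · rw [hχ.Gfun_eq_zero hy2, hχ.Gfun_eq_zero (hy2.trans hyx), sub_zero, abs_zero]
    positivity
  have hlip : |χ x - χ y| ≤ K * ‖x - y‖ := by
    simpa [dist_eq_norm] using hχ.lipschitz.dist_le_mul x y
  have hinv : ‖y‖⁻¹ ≤ ‖x‖⁻¹ + ‖y‖⁻¹ := le_add_of_nonneg_left (by positivity)
  calc |Gfun χ x - Gfun χ y|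
      = |(logPotential x - logPotential y) * χ x + logPotential y * (χ x - χ y)| := by
        simp only [Gfun_eq_logPotential_mul]
        ring_nf
    _ ≤ |logPotential x - logPotential y| * |χ x| + |logPotential y| * |χ x - χ y| := by
        rw [← abs_mul, ← abs_mul]
        exact abs_add_le _ _
    _ ≤ ‖x - y‖ * (‖x‖⁻¹ + ‖y‖⁻¹) * (1 + 2 * K) +
          2 * (‖x‖⁻¹ + ‖y‖⁻¹) * (K * ‖x - y‖) := by
        gcongr
        · exact abs_logPotential_sub_le hx hy
        · exact hχ.abs_le x
        · exact (abs_logPotential_le hy2.le).trans (by gcongr)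
    _ = (1 + 4 * K) * (‖x - y‖ * (‖x‖⁻¹ + ‖y‖⁻¹)) := by ring

end IsCutoff

end Gfun

section Gd

variable {K : ℝ≥0} {χ : ℝ² → ℝ} {B : ℝ} {ρ : ℝ² → ℝ}

lemma Gd_eq_integral (hρ : IsMollifier B ρ) {δ : ℝ} (hδ : 0 ≤ δ) (x : ℝ²) :
    Gd χ ρ δ x = ∫ z, Gfun χ (x - δ • z) * ρ z := by
  rcases hδ.eq_or_lt with rfl | hpos
  · simp [Gd, integral_const_mul, hρ.integral_eq_one]
  have hrescale := Measure.integral_comp_inv_smul_of_nonneg (volume : Measure ℝ²)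
    (fun z => Gfun χ (x - δ • z) * ρ z) hδ
  simp only [smul_inv_smul₀ hpos.ne', finrank_euclideanSpace_fin, smul_eq_mul] at hrescale
  calc Gd χ ρ δ x = ∫ y, δ⁻¹ ^ 2 * (Gfun χ (x - y) * ρ (δ⁻¹ • y)) := by
        simp only [Gd, if_neg hpos.ne', mollify, mul_left_comm]
    _ = ∫ z, Gfun χ (x - δ • z) * ρ z := by
        rw [integral_const_mul, hrescale]
        field_simp

lemma integrable_Gfun_mul (hχ : IsCutoff K χ) (hρ : IsMollifier B ρ) {δ : ℝ} (hδ : 0 ≤ δ) {x : ℝ²}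
    (hx : 0 < max δ ‖x‖) : Integrable fun z => Gfun χ (x - δ • z) * ρ z := by
  obtain ⟨_, -, hpot⟩ := hρ.exists_integral_mul_inv_norm_sub_smul_le one_lt_finrank_plane
  refine ((hpot δ hδ x hx).1.const_mul (2 * (1 + 2 * K))).mono'
    ((hχ.measurable_Gfun.comp (by fun_prop)).aestronglyMeasurable.mul
      hρ.integrable.aestronglyMeasurable) (.of_forall fun z => ?_)
  calc ‖Gfun χ (x - δ • z) * ρ z‖ = |Gfun χ (x - δ • z)| * |ρ z| := norm_mul _ _
    _ ≤ 2 * (1 + 2 * K) * ‖x - δ • z‖⁻¹ * |ρ z| := by gcongr; exact hχ.abs_Gfun_le _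
    _ = 2 * (1 + 2 * K) * (|ρ z| * ‖x - δ • z‖⁻¹) := by ring

lemma exists_abs_Gd_sub_le (hχ : IsCutoff K χ) (hρ : IsMollifier B ρ) :
    ∃ C, 0 ≤ C ∧ ∀ δ, 0 ≤ δ → ∀ x y : ℝ², 0 < max δ ‖x‖ → 0 < max δ ‖y‖ →
      |Gd χ ρ δ x - Gd χ ρ δ y| ≤ ‖x - y‖ * (C * ((max δ ‖x‖)⁻¹ + (max δ ‖y‖)⁻¹)) := by
  obtain ⟨C, hC, hpot⟩ := hρ.exists_integral_mul_inv_norm_sub_smul_le one_lt_finrank_plane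
  refine ⟨(1 + 4 * K) * C, by positivity, fun δ hδ x y hx hy => ?_⟩
  obtain ⟨hintx, hlex⟩ := hpot δ hδ x hx
  obtain ⟨hinty, hley⟩ := hpot δ hδ y hy
  have hbound : ∀ᵐ z, ‖Gfun χ (x - δ • z) * ρ z - Gfun χ (y - δ • z) * ρ z‖ ≤
      (1 + 4 * K) * ‖x - y‖ * (|ρ z| * ‖x - δ • z‖⁻¹ + |ρ z| * ‖y - δ • z‖⁻¹) := by
    filter_upwards [ae_sub_smul_ne_zero volume hx, ae_sub_smul_ne_zero volume hy] with z hxz hyz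
    have hG := hχ.abs_Gfun_sub_le hxz hyz
    rw [sub_sub_sub_cancel_right] at hG
    rw [← sub_mul, norm_mul, Real.norm_eq_abs, Real.norm_eq_abs]
    exact (mul_le_mul_of_nonneg_right hG (abs_nonneg _)).trans_eq (by ring)
  calc |Gd χ ρ δ x - Gd χ ρ δ y|
      = ‖∫ z, (Gfun χ (x - δ • z) * ρ z - Gfun χ (y - δ • z) * ρ z)‖ := by
        rw [Gd_eq_integral hρ hδ, Gd_eq_integral hρ hδ, integral_sub
          (integrable_Gfun_mul hχ hρ hδ hx) (integrable_Gfun_mul hχ hρ hδ hy), Real.norm_eq_abs]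
    _ ≤ ∫ z, (1 + 4 * K) * ‖x - y‖ * (|ρ z| * ‖x - δ • z‖⁻¹ + |ρ z| * ‖y - δ • z‖⁻¹) :=
        norm_integral_le_of_norm_le ((hintx.add hinty).const_mul _) hbound
    _ = (1 + 4 * K) * ‖x - y‖ *
          ((∫ z, |ρ z| * ‖x - δ • z‖⁻¹) + ∫ z, |ρ z| * ‖y - δ • z‖⁻¹) := by
        rw [integral_const_mul, integral_add hintx hinty]
    _ ≤ (1 + 4 * K) * ‖x - y‖ * (C * (max δ ‖x‖)⁻¹ + C * (max δ ‖y‖)⁻¹) := by gcongr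
    _ = ‖x - y‖ * ((1 + 4 * K) * C * ((max δ ‖x‖)⁻¹ + (max δ ‖y‖)⁻¹)) := by ring

lemma exists_norm_gradient_Gd_le (hχ : IsCutoff K χ) (hρ : IsMollifier B ρ) :
    ∃ C, 0 ≤ C ∧ ∀ δ, 0 ≤ δ → ∀ x : ℝ², 0 < max δ ‖x‖ →
      ‖gradient (Gd χ ρ δ) x‖ ≤ C * (max δ ‖x‖)⁻¹ := by
  obtain ⟨C, hC, hGd⟩ := exists_abs_Gd_sub_le hχ hρ
  refine ⟨2 * C, by positivity, fun δ hδ x hx => ?_⟩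
  have hmax : ContinuousAt (fun y : ℝ² => max δ ‖y‖) x := by fun_prop
  have hcont : ContinuousAt (fun y : ℝ² => C * ((max δ ‖y‖)⁻¹ + (max δ ‖x‖)⁻¹)) x :=
    ((hmax.inv₀ hx.ne').add continuousAt_const).const_mul C
  refine (norm_gradient_le_of_eventually_le hcont (by positivity) ?_).trans_eq (by ring)
  filter_upwards [hmax.eventually_const_lt hx] with y hy
  exact hGd δ hδ y x hy hx

lemma ae_differentiableAt_Gd (hχ : IsCutoff K χ) (hρ : IsMollifier B ρ) {δ : ℝ} (hδ : 0 ≤ δ) :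
    ∀ᵐ x, DifferentiableAt ℝ (Gd χ ρ δ) x := by
  rcases hδ.eq_or_lt with rfl | hpos
  · filter_upwards [hχ.lipschitz.ae_differentiableAt (μ := volume), Measure.ae_ne volume 0]
      with x hχx hx
    have hGd : Gd χ ρ 0 = fun x => logPotential x * χ x := funext fun x => if_pos rfl
    rw [hGd]
    exact (differentiableAt_logPotential hx).mul hχx
  · obtain ⟨C, hC, hGd⟩ := exists_abs_Gd_sub_le hχ hρ
    have hlip : LipschitzWith (C * (δ⁻¹ + δ⁻¹)).toNNReal (Gd χ ρ δ) :=
      .of_dist_le_mul fun x y => by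
        rw [Real.dist_eq, dist_eq_norm, Real.coe_toNNReal _ (by positivity), mul_comm]
        refine (hGd δ hδ x y (by positivity) (by positivity)).trans ?_
        gcongr <;> exact le_max_left _ _
    exact hlip.ae_differentiableAt

lemma Gd_sub_logPotential_eq_integral (hχ : IsCutoff K χ) (hρ : IsMollifier B ρ) {δ : ℝ}
    (hδ : 0 ≤ δ) (hδ2 : δ ≤ 1 / 2) {x : ℝ²} (hx : x ≠ 0) (hx2 : ‖x‖ ≤ 1 / 2) :
    Integrable (fun z => (logPotential (x - δ • z) - logPotential x) * ρ z) ∧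
      Gd χ ρ δ x - logPotential x =
        ∫ z, (logPotential (x - δ • z) - logPotential x) * ρ z := by
  have hlocal : (fun z => (logPotential (x - δ • z) - logPotential x) * ρ z) =
      fun z => Gfun χ (x - δ • z) * ρ z - logPotential x * ρ z := by
    funext z
    by_cases hz : ρ z = 0
    · simp [hz]
    have hδz : ‖δ • z‖ ≤ δ := hρ.norm_smul_le hδ hz
    rw [hχ.Gfun_eq_logPotential (by linarith [norm_sub_le x (δ • z)]), sub_mul]
  have hG := integrable_Gfun_mul hχ hρ hδ (lt_max_of_lt_right (norm_pos_iff.2 hx))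
  have hL := hρ.integrable.const_mul (logPotential x)
  rw [hlocal, integral_sub hG hL, integral_const_mul, hρ.integral_eq_one, mul_one,
    Gd_eq_integral hρ hδ]
  exact ⟨hG.sub hL, rfl⟩

lemma exists_abs_Gd_sub_logPotential_sub_le (hχ : IsCutoff K χ) (hρ : IsMollifier B ρ) :
    ∃ C, 0 ≤ C ∧ ∀ δ, 0 ≤ δ → δ ≤ 1 / 2 →
      ∀ x y : ℝ², x ≠ 0 → y ≠ 0 → ‖x‖ ≤ 1 / 2 → ‖y‖ ≤ 1 / 2 →
        |Gd χ ρ δ x - logPotential x - (Gd χ ρ δ y - logPotential y)| ≤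
          ‖x - y‖ * (C * δ * (‖x‖⁻¹ * ‖y‖⁻¹)) := by
  obtain ⟨C, hC, hpot⟩ := hρ.exists_integral_mul_inv_norm_sub_smul_le one_lt_finrank_plane
  refine ⟨2 * C, by positivity, fun δ hδ hδ2 x y hx hy hx2 hy2 => ?_⟩
  have hmaxx : 0 < max δ ‖x‖ := lt_max_of_lt_right (norm_pos_iff.2 hx)
  have hmaxy : 0 < max δ ‖y‖ := lt_max_of_lt_right (norm_pos_iff.2 hy)
  obtain ⟨hintx, hlex⟩ := hpot δ hδ x hmaxx
  obtain ⟨hinty, hley⟩ := hpot δ hδ y hmaxy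
  obtain ⟨hdiffx, heqx⟩ := Gd_sub_logPotential_eq_integral hχ hρ hδ hδ2 hx hx2
  obtain ⟨hdiffy, heqy⟩ := Gd_sub_logPotential_eq_integral hχ hρ hδ hδ2 hy hy2
  have hbound : ∀ᵐ z, ‖(logPotential (x - δ • z) - logPotential x) * ρ z -
      (logPotential (y - δ • z) - logPotential y) * ρ z‖ ≤
      ‖x - y‖ * δ * (‖y‖⁻¹ * (|ρ z| * ‖x - δ • z‖⁻¹) + ‖x‖⁻¹ * (|ρ z| * ‖y - δ • z‖⁻¹)) := by
    filter_upwards [ae_sub_smul_ne_zero volume hmaxx, ae_sub_smul_ne_zero volume hmaxy]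
      with z hxz hyz
    exact hρ.abs_logPotential_second_difference_mul_le hδ hx hy hxz hyz
  have hmajx := hintx.const_mul ‖y‖⁻¹
  have hmajy := hinty.const_mul ‖x‖⁻¹
  rw [heqx, heqy, ← integral_sub hdiffx hdiffy, ← Real.norm_eq_abs]
  refine (norm_integral_le_of_norm_le ((hmajx.add hmajy).const_mul _) hbound).trans ?_
  simp only [integral_const_mul, Pi.add_apply, integral_add hmajx hmajy]
  calc _ ≤ ‖x - y‖ * δ * (‖y‖⁻¹ * (C * ‖x‖⁻¹) + ‖x‖⁻¹ * (C * ‖y‖⁻¹)) := by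
        gcongr
        · exact hlex.trans (by gcongr; exact le_max_right _ _)
        · exact hley.trans (by gcongr; exact le_max_right _ _)
    _ = ‖x - y‖ * (2 * C * δ * (‖x‖⁻¹ * ‖y‖⁻¹)) := by ring

lemma exists_norm_gradient_Gd_sub_le (hχ : IsCutoff K χ) (hρ : IsMollifier B ρ) :
    ∃ C, 0 ≤ C ∧ ∀ δ, 0 ≤ δ → δ ≤ 1 / 2 → ∀ x : ℝ², x ≠ 0 → ‖x‖ < 1 / 2 →
      DifferentiableAt ℝ (Gd χ ρ δ) x →
        ‖gradient (Gd χ ρ δ) x - gradient logPotential x‖ ≤ C * δ * (‖x‖ ^ 2)⁻¹ := by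
  obtain ⟨C, hC, hGd⟩ := exists_abs_Gd_sub_logPotential_sub_le hχ hρ
  refine ⟨C, hC, fun δ hδ hδ2 x hx hx2 hdiff => ?_⟩
  have hgrad : gradient (fun y => Gd χ ρ δ y - logPotential y) x =
      gradient (Gd χ ρ δ) x - gradient logPotential x := by
    simp only [gradient, fderiv_fun_sub hdiff (differentiableAt_logPotential hx), map_sub]
  have hcont : ContinuousAt (fun y : ℝ² => C * δ * (‖y‖⁻¹ * ‖x‖⁻¹)) x :=
    ((continuousAt_id.norm.inv₀ (norm_ne_zero_iff.2 hx)).mul_const _).const_mul _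
  rw [← hgrad]
  refine (norm_gradient_le_of_eventually_le hcont (by positivity) ?_).trans_eq
    (by rw [sq, mul_inv])
  filter_upwards [eventually_ne_nhds hx, continuousAt_id.norm.eventually_lt_const hx2]
    with y hy hy2
  exact hGd δ hδ hδ2 y x hy hx hy2.le hx2.le

lemma gradient_Gd_eq_zero (hχ : IsCutoff K χ) (hρ : IsMollifier B ρ) {δ : ℝ} (hδ : 0 ≤ δ)
    (hδ2 : δ ≤ 1 / 2) {x : ℝ²} (hx : 3 ≤ ‖x‖) : gradient (Gd χ ρ δ) x = 0 := by
  have hGd : Gd χ ρ δ =ᶠ[𝓝 x] fun _ => 0 := by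
    have hnear : ∀ᶠ y in 𝓝 x, 5 / 2 < ‖y‖ := continuousAt_id.norm.eventually_const_lt
      (show (5 / 2 : ℝ) < ‖id x‖ by rw [id]; linarith)
    filter_upwards [hnear] with y hy
    rw [Gd_eq_integral hρ hδ]
    refine integral_eq_zero_of_ae (.of_forall fun z => ?_)
    by_cases hz : ρ z = 0
    · simp [hz]
    have hδz : ‖δ • z‖ ≤ δ := hρ.norm_smul_le hδ hz
    have hfar : 2 ≤ ‖y - δ • z‖ := by linarith [norm_sub_norm_le y (δ • z)]
    simp [hχ.Gfun_eq_zero hfar]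
  rw [gradient, hGd.fderiv_eq, fderiv_fun_const, Pi.zero_apply, map_zero]

end Gd

/-! ### Integration over annuli -/

lemma integrable_and_abs_integral_sub_le {α : Type*} {m : MeasurableSpace α} {μ : Measure α}
    {f g h : α → ℝ} (hf : AEStronglyMeasurable f μ) (hg : Integrable g μ) (hh : Integrable h μ)
    (hle : ∀ᵐ x ∂μ, |f x - g x| ≤ h x) :
    Integrable f μ ∧ |(∫ x, f x ∂μ) - ∫ x, g x ∂μ| ≤ ∫ x, h x ∂μ := by
  have hfg : Integrable (fun x => f x - g x) μ := hh.mono' (hf.sub hg.aestronglyMeasurable) hle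
  have hfint : Integrable f μ := (hfg.add hg).congr (.of_forall fun x => sub_add_cancel _ _)
  rw [← integral_sub hfint hg]
  exact ⟨hfint, norm_integral_le_of_norm_le (f := fun x => f x - g x) hh hle⟩

lemma indicator_norm_preimage {E F : Type*} [Norm E] [Zero F] (s : Set ℝ) (f : ℝ → F) :
    (norm ⁻¹' s).indicator (fun x : E => f ‖x‖) = fun x => s.indicator f ‖x‖ := rfl

section Annulus

variable {E : Type*} [NormedAddCommGroup E] [NormedSpace ℝ E] [Nontrivial E]
  [FiniteDimensional ℝ E] [MeasurableSpace E] [BorelSpace E] (μ : Measure E) [μ.IsAddHaarMeasure]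
  {F : Type*} [NormedAddCommGroup F] [NormedSpace ℝ F] {a b : ℝ}

lemma integrableOn_fun_norm_annulus_iff {f : ℝ → F} (ha : 0 ≤ a) (hab : a ≤ b) :
    IntegrableOn (fun x => f ‖x‖) (norm ⁻¹' Set.Ioc a b) μ ↔
      IntervalIntegrable (fun r => r ^ (Module.finrank ℝ E - 1) • f r) volume a b := by
  rw [← integrable_indicator_iff (measurable_norm measurableSet_Ioc), indicator_norm_preimage,
    integrable_fun_norm_addHaar, intervalIntegrable_iff_integrableOn_Ioc_of_le hab]
  simp only [← Set.indicator_smul]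
  rw [IntegrableOn, integrable_indicator_iff measurableSet_Ioc, IntegrableOn, IntegrableOn,
    Measure.restrict_restrict measurableSet_Ioc,
    Set.inter_eq_left.2 (Set.Ioc_subset_Ioi_self.trans (Set.Ioi_subset_Ioi ha))]

lemma setIntegral_fun_norm_annulus (f : ℝ → F) (ha : 0 ≤ a) (hab : a ≤ b) :
    ∫ x in norm ⁻¹' Set.Ioc a b, f ‖x‖ ∂μ = Module.finrank ℝ E • μ.real (ball 0 1) •
      ∫ r in a..b, r ^ (Module.finrank ℝ E - 1) • f r := by
  rw [← integral_indicator (measurable_norm measurableSet_Ioc), indicator_norm_preimage,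
    integral_fun_norm_addHaar, intervalIntegral.integral_of_le hab]
  simp only [← Set.indicator_smul]
  rw [integral_indicator measurableSet_Ioc, Measure.restrict_restrict measurableSet_Ioc,
    Set.inter_eq_left.2 (Set.Ioc_subset_Ioi_self.trans (Set.Ioi_subset_Ioi ha))]

end Annulus

section Plane

variable {a b : ℝ}

lemma integrableOn_annulus_and_setIntegral_eq {f g : ℝ → ℝ} (ha : 0 ≤ a) (hab : a ≤ b)
    (hg : IntervalIntegrable g volume a b) (hfg : ∀ r ∈ Set.Ioc a b, r * f r = g r) :
    IntegrableOn (fun x : ℝ² => f ‖x‖) (norm ⁻¹' Set.Ioc a b) ∧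
      ∫ x : ℝ² in norm ⁻¹' Set.Ioc a b, f ‖x‖ = 2 * Real.pi * ∫ r in a..b, g r := by
  have hfg' : Set.EqOn (fun r => r ^ (Module.finrank ℝ ℝ² - 1) • f r) g (Set.uIoc a b) := by
    rw [Set.uIoc_of_le hab]
    intro r hr
    simpa using hfg r hr
  have hdisc : (volume : Measure ℝ²).real (ball 0 1) = Real.pi := by
    simp [Measure.real, Real.pi_pos.le]
  rw [integrableOn_fun_norm_annulus_iff volume ha hab, intervalIntegrable_congr hfg',
    setIntegral_fun_norm_annulus volume f ha hab,
    intervalIntegral.integral_congr_ae (.of_forall hfg'), hdisc, finrank_euclideanSpace_fin]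
  exact ⟨hg, by simp [mul_assoc]⟩

lemma integrableOn_inv_norm_annulus_and_setIntegral_eq (hb : 0 ≤ b) :
    IntegrableOn (fun x : ℝ² => ‖x‖⁻¹) (norm ⁻¹' Set.Ioc 0 b) ∧
      ∫ x : ℝ² in norm ⁻¹' Set.Ioc 0 b, ‖x‖⁻¹ = 2 * Real.pi * b := by
  simpa using integrableOn_annulus_and_setIntegral_eq (f := fun r => r⁻¹) (g := fun _ => 1) le_rfl
    hb intervalIntegrable_const fun r hr => mul_inv_cancel₀ hr.1.ne'

lemma integrableOn_inv_norm_sq_annulus_and_setIntegral_eq (ha : 0 < a) (hab : a ≤ b) :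
    IntegrableOn (fun x : ℝ² => (‖x‖ ^ 2)⁻¹) (norm ⁻¹' Set.Ioc a b) ∧
      ∫ x : ℝ² in norm ⁻¹' Set.Ioc a b, (‖x‖ ^ 2)⁻¹ = 2 * Real.pi * Real.log (b / a) := by
  have hb : 0 < b := ha.trans_le hab
  have hint : IntervalIntegrable (fun r : ℝ => r⁻¹) volume a b :=
    intervalIntegrable_inv_iff.2 (.inr (Set.notMem_uIcc_of_lt ha hb))
  rw [← integral_inv_of_pos ha hb]
  refine integrableOn_annulus_and_setIntegral_eq (f := fun r => (r ^ 2)⁻¹) ha.le hab hint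
    fun r hr => ?_
  have hr0 : r ≠ 0 := (ha.trans hr.1).ne'
  field_simp

lemma integrableOn_inv_norm_cube_annulus_and_setIntegral_eq (ha : 0 < a) (hab : a ≤ b) :
    IntegrableOn (fun x : ℝ² => (‖x‖ ^ 3)⁻¹) (norm ⁻¹' Set.Ioc a b) ∧
      ∫ x : ℝ² in norm ⁻¹' Set.Ioc a b, (‖x‖ ^ 3)⁻¹ = 2 * Real.pi * (a⁻¹ - b⁻¹) := by
  have h0 : (0 : ℝ) ∉ Set.uIcc a b := Set.notMem_uIcc_of_lt ha (ha.trans_le hab)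
  have hpow : ∫ r in a..b, r ^ (-2 : ℤ) = a⁻¹ - b⁻¹ := by
    rw [integral_zpow (.inr ⟨by norm_num, h0⟩)]
    norm_num [div_neg]
  rw [← hpow]
  refine integrableOn_annulus_and_setIntegral_eq (f := fun r => (r ^ 3)⁻¹) ha.le hab
    (intervalIntegral.intervalIntegrable_zpow (.inr h0)) fun r hr => ?_
  have hr0 : r ≠ 0 := (ha.trans hr.1).ne'
  rw [zpow_neg, zpow_ofNat]
  field_simp

/-- A radial function, of integral `O(1 + log (R / r))` uniformly in `δ`, which bounds the deviation
of the gradient pairing at scale `δ` from its main term `(2π)⁻² ‖x‖⁻²` on `δ < ‖x‖ ≤ r`. -/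
noncomputable def annulusMajorant (δ r R : ℝ) (x : ℝ²) : ℝ :=
  (norm ⁻¹' Set.Ioc 0 δ).indicator (fun x => δ⁻¹ * ‖x‖⁻¹) x +
    (norm ⁻¹' Set.Ioc δ r).indicator (fun x => δ * (‖x‖ ^ 3)⁻¹) x +
    (norm ⁻¹' Set.Ioc r R).indicator (fun x => (‖x‖ ^ 2)⁻¹) x

variable {δ r R : ℝ}

lemma measurableSet_norm_preimage_Ioc (a b : ℝ) :
    MeasurableSet (norm ⁻¹' Set.Ioc a b : Set ℝ²) :=
  measurable_norm measurableSet_Ioc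

lemma integrable_annulusMajorant_and_integral_le (hδ : 0 < δ) (hδr : δ ≤ r) (hrR : r ≤ R) :
    Integrable (annulusMajorant δ r R) ∧
      ∫ x, annulusMajorant δ r R x ≤ 2 * Real.pi * (2 + Real.log (R / r)) := by
  have hr : 0 < r := hδ.trans_le hδr
  obtain ⟨hcore, hcore_eq⟩ := integrableOn_inv_norm_annulus_and_setIntegral_eq hδ.le
  obtain ⟨hshell, hshell_eq⟩ := integrableOn_inv_norm_cube_annulus_and_setIntegral_eq hδ hδr
  obtain ⟨houter, houter_eq⟩ := integrableOn_inv_norm_sq_annulus_and_setIntegral_eq hr hrR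
  have hcore' := IntegrableOn.integrable_indicator (hcore.const_mul δ⁻¹)
    (measurableSet_norm_preimage_Ioc _ _)
  have hshell' := IntegrableOn.integrable_indicator (hshell.const_mul δ)
    (measurableSet_norm_preimage_Ioc _ _)
  have houter' := houter.integrable_indicator (measurableSet_norm_preimage_Ioc _ _)
  refine ⟨(hcore'.add hshell').add houter', ?_⟩
  calc ∫ x, annulusMajorant δ r R x
      = δ⁻¹ * (2 * Real.pi * δ) + δ * (2 * Real.pi * (δ⁻¹ - r⁻¹)) +
          2 * Real.pi * Real.log (R / r) := by
        refine ((integral_add (hcore'.add hshell') houter').trans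
          (congrArg (· + _) (integral_add hcore' hshell'))).trans ?_
        simp only [integral_indicator (measurableSet_norm_preimage_Ioc _ _), integral_const_mul,
          hcore_eq, hshell_eq, houter_eq]
    _ = 2 * Real.pi * (2 + Real.log (R / r)) - 2 * Real.pi * δ * r⁻¹ := by
        field_simp
        ring
    _ ≤ 2 * Real.pi * (2 + Real.log (R / r)) := sub_le_self _ (by positivity)

lemma abs_sub_indicator_le_annulusMajorant {C k y : ℝ} {x : ℝ²} (hx : x ≠ 0) (hδr : δ ≤ r)
    (hbound : |y| ≤ C * (‖x‖⁻¹ * (max δ ‖x‖)⁻¹))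
    (hnear : ‖x‖ ≤ r → |y - k * (‖x‖ ^ 2)⁻¹| ≤ C * (δ * (‖x‖ ^ 3)⁻¹))
    (hfar : R < ‖x‖ → y = 0) :
    |y - (norm ⁻¹' Set.Ioc δ r).indicator (fun x => k * (‖x‖ ^ 2)⁻¹) x| ≤
      C * annulusMajorant δ r R x := by
  have hpos : 0 < ‖x‖ := norm_pos_iff.2 hx
  simp only [annulusMajorant, Set.indicator, Set.mem_preimage, Set.mem_Ioc]
  rcases le_or_gt ‖x‖ δ with hxδ | hxδ
  · rw [max_eq_left hxδ, mul_comm ‖x‖⁻¹] at hbound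
    simpa [hpos, hxδ, hxδ.not_gt, (hxδ.trans hδr).not_gt] using hbound
  rw [max_eq_right hxδ.le, ← mul_inv, ← sq] at hbound
  rcases le_or_gt ‖x‖ r with hxr | hxr
  · simpa [hxδ, hxδ.not_ge, hxr, hxr.not_gt] using hnear hxr
  rcases le_or_gt ‖x‖ R with hxR | hxR
  · simpa [hxδ.not_ge, hxr, hxr.not_ge, hxR] using hbound
  · simp [hxδ.not_ge, hxr.not_ge, hxR.not_ge, hfar hxR]

lemma integrable_and_abs_integral_sub_log_le {f : ℝ² → ℝ} {C k : ℝ} (hC : 0 ≤ C)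
    (hδ : 0 < δ) (hδr : δ ≤ r) (hrR : r ≤ R) (hf : AEStronglyMeasurable f)
    (hbound : ∀ᵐ x, |f x| ≤ C * (‖x‖⁻¹ * (max δ ‖x‖)⁻¹))
    (hnear : ∀ᵐ x, ‖x‖ ≤ r → |f x - k * (‖x‖ ^ 2)⁻¹| ≤ C * (δ * (‖x‖ ^ 3)⁻¹))
    (hfar : ∀ x, R < ‖x‖ → f x = 0) :
    Integrable f ∧
      |(∫ x, f x) - k * (2 * Real.pi * Real.log (r / δ))| ≤
        C * (2 * Real.pi * (2 + Real.log (R / r))) := by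
  obtain ⟨hmain, hmain_eq⟩ := integrableOn_inv_norm_sq_annulus_and_setIntegral_eq hδ hδr
  obtain ⟨hmaj, hmaj_le⟩ := integrable_annulusMajorant_and_integral_le hδ hδr hrR
  have hle : ∀ᵐ x, |f x - (norm ⁻¹' Set.Ioc δ r).indicator (fun x => k * (‖x‖ ^ 2)⁻¹) x| ≤
      C * annulusMajorant δ r R x := by
    filter_upwards [hbound, hnear, Measure.ae_ne volume 0] with x hx hxr hx0
    exact abs_sub_indicator_le_annulusMajorant hx0 hδr hx hxr (hfar x)
  obtain ⟨hint, hest⟩ := integrable_and_abs_integral_sub_le hf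
    (IntegrableOn.integrable_indicator (hmain.const_mul k) (measurableSet_norm_preimage_Ioc _ _))
    (hmaj.const_mul C) hle
  rw [integral_indicator (measurableSet_norm_preimage_Ioc _ _), integral_const_mul, hmain_eq,
    integral_const_mul] at hest
  exact ⟨hint, hest.trans (by gcongr)⟩

end Plane

/-! ### The gradient pairing -/

section GradientPairing

variable {K : ℝ≥0} {χ : ℝ² → ℝ} {B : ℝ} {ρ : ℝ² → ℝ}

lemma exists_abs_inner_gradient_Gd_le (hχ : IsCutoff K χ) (hρ : IsMollifier B ρ) :
    ∃ C, 0 ≤ C ∧ ∀ δ₁ δ₂, 0 ≤ δ₁ → 0 ≤ δ₂ → ∀ x : ℝ², x ≠ 0 →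
      |⟪gradient (Gd χ ρ δ₁) x, gradient (Gd χ ρ δ₂) x⟫| ≤ C * (‖x‖⁻¹ * (max δ₂ ‖x‖)⁻¹) := by
  obtain ⟨C, hC, hgrad⟩ := exists_norm_gradient_Gd_le hχ hρ
  refine ⟨C * C, by positivity, fun δ₁ δ₂ hδ₁ hδ₂ x hx => ?_⟩
  have hpos : 0 < ‖x‖ := norm_pos_iff.2 hx
  calc |⟪gradient (Gd χ ρ δ₁) x, gradient (Gd χ ρ δ₂) x⟫|
      ≤ ‖gradient (Gd χ ρ δ₁) x‖ * ‖gradient (Gd χ ρ δ₂) x‖ := abs_real_inner_le_norm _ _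
    _ ≤ C * (max δ₁ ‖x‖)⁻¹ * (C * (max δ₂ ‖x‖)⁻¹) := by
        gcongr
        exacts [hgrad δ₁ hδ₁ x (lt_max_of_lt_right hpos), hgrad δ₂ hδ₂ x (lt_max_of_lt_right hpos)]
    _ ≤ C * ‖x‖⁻¹ * (C * (max δ₂ ‖x‖)⁻¹) := by gcongr; exact le_max_right _ _
    _ = C * C * (‖x‖⁻¹ * (max δ₂ ‖x‖)⁻¹) := by ring

lemma exists_abs_inner_gradient_Gd_sub_le (hχ : IsCutoff K χ) (hρ : IsMollifier B ρ) :
    ∃ C, 0 ≤ C ∧ ∀ δ₁ δ₂, 0 ≤ δ₁ → δ₁ ≤ δ₂ → δ₂ ≤ 1 / 2 → ∀ x : ℝ², x ≠ 0 → ‖x‖ < 1 / 2 →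
      DifferentiableAt ℝ (Gd χ ρ δ₁) x → DifferentiableAt ℝ (Gd χ ρ δ₂) x →
        |⟪gradient (Gd χ ρ δ₁) x, gradient (Gd χ ρ δ₂) x⟫ -
          (2 * Real.pi)⁻¹ ^ 2 * (‖x‖ ^ 2)⁻¹| ≤ C * (δ₂ * (‖x‖ ^ 3)⁻¹) := by
  obtain ⟨C, hC, hgrad⟩ := exists_norm_gradient_Gd_le hχ hρ
  obtain ⟨D, hD, hdev⟩ := exists_norm_gradient_Gd_sub_le hχ hρ
  refine ⟨D * (C + 1), by positivity, fun δ₁ δ₂ hδ₁ hδ hδ₂ x hx hx2 hdiff₁ hdiff₂ => ?_⟩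
  have hpos : 0 < ‖x‖ := norm_pos_iff.2 hx
  have hgradL := norm_gradient_logPotential hx
  have hgradL_le : ‖gradient logPotential x‖ ≤ ‖x‖⁻¹ :=
    hgradL.trans_le (mul_le_of_le_one_left (by positivity) inv_two_pi_le_one)
  have hgrad₂ : ‖gradient (Gd χ ρ δ₂) x‖ ≤ C * ‖x‖⁻¹ :=
    (hgrad δ₂ (hδ₁.trans hδ) x (lt_max_of_lt_right hpos)).trans
      (by gcongr; exact le_max_right _ _)
  calc |⟪gradient (Gd χ ρ δ₁) x, gradient (Gd χ ρ δ₂) x⟫ - (2 * Real.pi)⁻¹ ^ 2 * (‖x‖ ^ 2)⁻¹|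
      = |⟪gradient (Gd χ ρ δ₁) x, gradient (Gd χ ρ δ₂) x⟫ - ‖gradient logPotential x‖ ^ 2| := by
        rw [hgradL, mul_pow, inv_pow ‖x‖]
    _ ≤ ‖gradient (Gd χ ρ δ₁) x - gradient logPotential x‖ * ‖gradient (Gd χ ρ δ₂) x‖ +
          ‖gradient logPotential x‖ * ‖gradient (Gd χ ρ δ₂) x - gradient logPotential x‖ :=
        abs_inner_sub_norm_sq_le _ _ _
    _ ≤ D * δ₂ * (‖x‖ ^ 2)⁻¹ * (C * ‖x‖⁻¹) + ‖x‖⁻¹ * (D * δ₂ * (‖x‖ ^ 2)⁻¹) := by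
        gcongr
        · exact mul_nonneg (mul_nonneg hD (hδ₁.trans hδ)) (by positivity)
        · exact (hdev δ₁ hδ₁ (hδ.trans hδ₂) x hx hx2 hdiff₁).trans (by gcongr)
        · exact hdev δ₂ (hδ₁.trans hδ) hδ₂ x hx hx2 hdiff₂
    _ = D * (C + 1) * (δ₂ * (‖x‖ ^ 3)⁻¹) := by
        field_simp

lemma inv_two_pi_sq_mul_log_div_eq {δ : ℝ} (hδ : 0 < δ) :
    (2 * Real.pi)⁻¹ ^ 2 * (2 * Real.pi * Real.log (1 / 4 / δ)) =
      (2 * Real.pi)⁻¹ * Real.log (1 / δ) - (2 * Real.pi)⁻¹ * Real.log 4 := by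
  rw [div_right_comm, Real.log_div (one_div_ne_zero hδ.ne') (by norm_num)]
  field_simp

lemma exists_abs_integral_inner_gradient_Gd_sub_log_le (hχ : IsCutoff K χ) (hρ : IsMollifier B ρ) :
    ∃ A, ∀ δ₁ δ₂, 0 ≤ δ₁ → 0 ≤ δ₂ → 0 < max δ₁ δ₂ → max δ₁ δ₂ ≤ 1 / 4 →
      Integrable (fun x => ⟪gradient (Gd χ ρ δ₁) x, gradient (Gd χ ρ δ₂) x⟫) ∧
        |(∫ x, ⟪gradient (Gd χ ρ δ₁) x, gradient (Gd χ ρ δ₂) x⟫) -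
          (2 * Real.pi)⁻¹ * Real.log (1 / max δ₁ δ₂)| ≤ A := by
  obtain ⟨C, hC, hbound⟩ := exists_abs_inner_gradient_Gd_le hχ hρ
  obtain ⟨D, hD, hnear⟩ := exists_abs_inner_gradient_Gd_sub_le hχ hρ
  refine ⟨(C + D) * (2 * Real.pi * (2 + Real.log (3 / (1 / 4)))) +
    (2 * Real.pi)⁻¹ * Real.log 4, fun δ₁ δ₂ hδ₁ hδ₂ hmax hmax4 => ?_⟩
  wlog hδ : δ₁ ≤ δ₂ generalizing δ₁ δ₂
  · rw [max_comm] at hmax hmax4 ⊢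
    simpa only [real_inner_comm] using this δ₂ δ₁ hδ₂ hδ₁ hmax hmax4 (le_of_not_ge hδ)
  rw [max_eq_right hδ] at hmax hmax4 ⊢
  have hsize : ∀ᵐ x, |⟪gradient (Gd χ ρ δ₁) x, gradient (Gd χ ρ δ₂) x⟫| ≤
      (C + D) * (‖x‖⁻¹ * (max δ₂ ‖x‖)⁻¹) := by
    filter_upwards [Measure.ae_ne volume 0] with x hx
    exact (hbound δ₁ δ₂ hδ₁ hδ₂ x hx).trans (by gcongr; exact le_add_of_nonneg_right hD)
  have hdev : ∀ᵐ x, ‖x‖ ≤ 1 / 4 → |⟪gradient (Gd χ ρ δ₁) x, gradient (Gd χ ρ δ₂) x⟫ -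
      (2 * Real.pi)⁻¹ ^ 2 * (‖x‖ ^ 2)⁻¹| ≤ (C + D) * (δ₂ * (‖x‖ ^ 3)⁻¹) := by
    filter_upwards [Measure.ae_ne volume 0, ae_differentiableAt_Gd hχ hρ hδ₁,
      ae_differentiableAt_Gd hχ hρ hδ₂] with x hx hdiff₁ hdiff₂ hx4
    exact (hnear δ₁ δ₂ hδ₁ hδ (by linarith) x hx (by linarith) hdiff₁ hdiff₂).trans
      (by gcongr; exact le_add_of_nonneg_left hC)
  have hfar (x : ℝ²) (hx : 3 < ‖x‖) :
      ⟪gradient (Gd χ ρ δ₁) x, gradient (Gd χ ρ δ₂) x⟫ = 0 := by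
    rw [gradient_Gd_eq_zero hχ hρ hδ₁ (by linarith) hx.le, inner_zero_left]
  obtain ⟨hint, hest⟩ := integrable_and_abs_integral_sub_log_le (add_nonneg hC hD) hmax hmax4
    (by norm_num) ((measurable_gradient _).inner (measurable_gradient _)).aestronglyMeasurable
    hsize hdev hfar
  rw [inv_two_pi_sq_mul_log_div_eq hmax, sub_sub_eq_add_sub, add_sub_right_comm] at hest
  have hlog4 : 0 ≤ (2 * Real.pi)⁻¹ * Real.log 4 :=
    mul_nonneg (by positivity) (Real.log_nonneg (by norm_num))
  refine ⟨hint, ?_⟩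
  rw [abs_le] at hest ⊢
  constructor <;> linarith

end GradientPairing

lemma log_bounds_of_abs_sub_log_le {A k I δ : ℝ} (hk : 0 < k) (hδ : 0 < δ)
    (hδA : δ ≤ Real.exp (-(2 * A / k))) (hI : |I - k * Real.log (1 / δ)| ≤ A) :
    k / 2 * Real.log (1 / δ) ≤ I ∧ I ≤ 3 * k / 2 * Real.log (1 / δ) := by
  have hlog : 2 * A / k ≤ Real.log (1 / δ) := by
    rw [one_div, Real.log_inv, le_neg]
    exact (Real.log_le_iff_le_exp hδ).2 hδA
  rw [div_le_iff₀ hk] at hlog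
  rw [abs_le] at hI
  constructor <;> linarith

theorem log_divergence_of_gradient_pairing_general {K : ℝ≥0} {χ : ℝ² → ℝ} (hχ : IsCutoff K χ)
    {B : ℝ} {ρ : ℝ² → ℝ} (hρ : IsMollifier B ρ) :
    ∃ δstar ∈ Set.Ioc (0:ℝ) (1/2), ∃ c₁ c₂ : ℝ, 0 < c₁ ∧ c₁ < c₂ ∧
      ∀ δ₁ ∈ Set.Icc (0:ℝ) δstar, ∀ δ₂ ∈ Set.Icc (0:ℝ) δstar, 0 < max δ₁ δ₂ →
        Integrable (fun x => ⟪gradient (Gd χ ρ δ₁) x, gradient (Gd χ ρ δ₂) x⟫) ∧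
        c₁ * Real.log (1 / max δ₁ δ₂)
          ≤ ∫ x, ⟪gradient (Gd χ ρ δ₁) x, gradient (Gd χ ρ δ₂) x⟫ ∧
        (∫ x, ⟪gradient (Gd χ ρ δ₁) x, gradient (Gd χ ρ δ₂) x⟫)
          ≤ c₂ * Real.log (1 / max δ₁ δ₂) := by
  obtain ⟨A, hA⟩ := exists_abs_integral_inner_gradient_Gd_sub_log_le hχ hρ
  have hk : 0 < (2 * Real.pi)⁻¹ := by positivity
  refine ⟨min (1 / 4) (Real.exp (-(2 * A / (2 * Real.pi)⁻¹))),
    ⟨by positivity, (min_le_left _ _).trans (by norm_num)⟩,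
    (2 * Real.pi)⁻¹ / 2, 3 * (2 * Real.pi)⁻¹ / 2, by positivity, by linarith,
    fun δ₁ hδ₁ δ₂ hδ₂ hmax => ?_⟩
  have hmax_le := max_le hδ₁.2 hδ₂.2
  obtain ⟨hint, hest⟩ := hA δ₁ δ₂ hδ₁.1 hδ₂.1 hmax (hmax_le.trans (min_le_left _ _))
  exact ⟨hint, log_bounds_of_abs_sub_log_le hk hmax (hmax_le.trans (min_le_right _ _)) hest⟩

theorem log_divergence_of_gradient_pairing
    (χ : EuclideanSpace ℝ (Fin 2) → ℝ)
    (hχsmooth : ContDiff ℝ (⊤ : ℕ∞) χ)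
    (hχrange : ∀ x, χ x ∈ Set.Icc (0:ℝ) 1)
    (hχradial : ∀ x y, ‖x‖ = ‖y‖ → χ x = χ y)
    (hχone : ∀ x, ‖x‖ ≤ 1 → χ x = 1)
    (hχzero : ∀ x, 2 ≤ ‖x‖ → χ x = 0)
    (ρ : EuclideanSpace ℝ (Fin 2) → ℝ)
    (hρsmooth : ContDiff ℝ (⊤ : ℕ∞) ρ)
    (hρeven : ∀ x, ρ (-x) = ρ x)
    (hρsupp : Function.support ρ ⊆ Metric.closedBall 0 1)
    (hρint : ∫ x, ρ x = 1) :
    ∃ δstar ∈ Set.Ioc (0:ℝ) (1/2), ∃ c₁ c₂ : ℝ, 0 < c₁ ∧ c₁ < c₂ ∧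
      ∀ δ₁ ∈ Set.Icc (0:ℝ) δstar, ∀ δ₂ ∈ Set.Icc (0:ℝ) δstar, 0 < max δ₁ δ₂ →
        Integrable (fun x => ⟪gradient (Gd χ ρ δ₁) x, gradient (Gd χ ρ δ₂) x⟫) ∧
        c₁ * Real.log (1 / max δ₁ δ₂)
          ≤ ∫ x, ⟪gradient (Gd χ ρ δ₁) x, gradient (Gd χ ρ δ₂) x⟫ ∧
        (∫ x, ⟪gradient (Gd χ ρ δ₁) x, gradient (Gd χ ρ δ₂) x⟫)
          ≤ c₂ * Real.log (1 / max δ₁ δ₂) := by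
  obtain ⟨K, hχ⟩ := exists_isCutoff_of_contDiff (hχsmooth.of_le (by norm_cast)) hχone hχzero
  obtain ⟨B, hρ⟩ := exists_isMollifier_of_continuous hρsmooth.continuous hρsupp hρint
  exact log_divergence_of_gradient_pairing_general hχ hρ
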